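/- For the balanced Rudin–Shapiro sequence, η^{(4)}(m_1,m_2,m_3) = 1 if and only if, up to a permutation of the indices, m_1 = 0 and m_2 = m_3. Moreover, |θ^{(4)}(m_1,m_2,m_3)| < 1 for all (m_1,m_2,m_3) ∈ ℤ³. -/

import Mathlib

open Filter Finset

/-!
Consider the products `∏ₖ a (i + s k)` of an even number of shifted values, possibly twisted by a
sign `(-1) ^ (e * i)`. Such a product takes the values `±1`, and each of its values at large `i`
recurs along an arithmetic progression, because `a (4 ^ k * 2 * m + j) = ± a j` for `0 ≤ j < 4 ^ k`
with a sign independent of `j`. Hence its mean has absolute value less than one unless the product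
is eventually constant.

Eventual constancy passes from the shifts `s` to `s / 4`, with a new twist given by the parity of
the number of odd values of `s / 2`. Given a threshold `x`, iterating this on `s - x` leads to
shifts in `{-1, 0}`. One more step, applied to these shifts increased by two, identifies them all,
so the untwisted product is one and the new twist must be trivial: the number of `k` with `x ≤ s k`
is even. As `x` varies, every value of `s` is taken an even number of times. Then the untwisted
product is constantly one, so `e` is even as well.
-/

/-! ### Symmetric means -/

section SymmetricMean

/-- The mean of `f` over the `2 * N + 1` integers in `[-N, N]`. Correlations are limits of these
means as `N → ∞`. -/
noncomputable def symmetricMean (f : ℤ → ℝ) (N : ℕ) : ℝ :=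
  1 / (2 * (N : ℝ) + 1) * ∑ i ∈ Icc (-(N : ℤ)) N, f i

theorem symmetricMean_const (c : ℝ) (N : ℕ) : symmetricMean (fun _ => c) N = c := by
  have hcard : ((N : ℤ) + 1 - -(N : ℤ)).toNat = 2 * N + 1 := by lia
  rw [symmetricMean, sum_const, Int.card_Icc, hcard, nsmul_eq_mul]
  push_cast
  field_simp

theorem symmetricMean_const_sub_mul (b c : ℝ) (f : ℤ → ℝ) (N : ℕ) :
    symmetricMean (fun i => b - c * f i) N = b - c * symmetricMean f N := by
  conv_rhs => rw [← symmetricMean_const b N]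
  simp only [symmetricMean, sum_sub_distrib, ← mul_sum]
  ring

variable {f : ℤ → ℝ} {l : ℝ}

theorem mul_le_sum_Icc_of_le_on_progression (hf : ∀ i, 0 ≤ f i) {δ : ℝ} {n L : ℕ} (hL : 0 < L)
    (hδ : ∀ m : ℕ, δ ≤ f (n + L * m)) (M : ℕ) :
    (M + 1) * δ ≤ ∑ i ∈ Icc (-((n + L * M : ℕ) : ℤ)) (n + L * M : ℕ), f i := by
  have hinj : Function.Injective fun m : ℕ => (n + L * m : ℤ) := fun x y hxy => by
    simpa [hL.ne'] using hxy
  have hsub : (range (M + 1)).image (fun m : ℕ => (n + L * m : ℤ)) ⊆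
      Icc (-((n + L * M : ℕ) : ℤ)) (n + L * M : ℕ) := by
    simp only [image_subset_iff, mem_range, mem_Icc]
    intro m hm
    have : L * m ≤ L * M := Nat.mul_le_mul_left L (by lia)
    norm_cast
    lia
  calc (M + 1) * δ = #(range (M + 1)) • δ := by simp
    _ ≤ ∑ m ∈ range (M + 1), f (n + L * m) := card_nsmul_le_sum _ _ _ fun m _ => hδ m
    _ = ∑ i ∈ (range (M + 1)).image fun m : ℕ => (n + L * m : ℤ), f i :=
      (sum_image hinj.injOn).symm
    _ ≤ _ := sum_le_sum_of_subset_of_nonneg hsub fun i _ _ => hf i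

theorem pos_of_tendsto_symmetricMean (hf : ∀ i, 0 ≤ f i) {δ : ℝ} (hδ₀ : 0 < δ) {n L : ℕ}
    (hL : 0 < L) (hδ : ∀ m : ℕ, δ ≤ f (n + L * m))
    (hl : Tendsto (symmetricMean f) atTop (nhds l)) : 0 < l := by
  have hsub : Tendsto (fun M : ℕ => n + L * M) atTop atTop :=
    tendsto_atTop_mono (fun M => (Nat.le_mul_of_pos_left M hL).trans (Nat.le_add_left _ n))
      tendsto_id
  have hbound : ∀ M : ℕ, δ / (2 * n + 2 * L + 1) ≤ symmetricMean f (n + L * M) := fun M => by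
    rw [symmetricMean, one_div, inv_mul_eq_div]
    refine le_trans ?_ (div_le_div_of_nonneg_right
      (mul_le_sum_Icc_of_le_on_progression hf hL hδ M) (by positivity))
    rw [div_le_div_iff₀ (by positivity) (by positivity)]
    have : 0 ≤ δ * (2 * n * M + M + 2 * L) := by positivity
    push_cast
    linarith
  exact lt_of_lt_of_le (by positivity) (ge_of_tendsto' (hl.comp hsub) hbound)

theorem abs_lt_one_of_tendsto_symmetricMean (hf : ∀ i, |f i| = 1)
    (hrec : ∀ᶠ i in atTop, ∃ L : ℕ, 0 < L ∧ ∀ m : ℕ, f (i + L * m) = f i)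
    (hconst : ¬ EventuallyConst f atTop) (hl : Tendsto (symmetricMean f) atTop (nhds l)) :
    |l| < 1 := by
  have hmul_lt : ∀ c : ℝ, |c| = 1 → c * l < 1 := fun c hc => by
    have hne : ∃ᶠ i in atTop, f i ≠ c := fun h => hconst <|
      eventuallyConst_iff_exists_eventuallyEq.2 ⟨c, h.mono fun _ => not_not.1⟩
    obtain ⟨i, hi, ⟨L, hL, hper⟩, hi₀⟩ := (hne.and_eventually
      (hrec.and (eventually_ge_atTop 0))).exists
    lift i to ℕ using hi₀
    have hfi : f i = -c := (abs_eq_abs.1 ((hf i).trans hc.symm)).resolve_left hi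
    have hcc : c * c = 1 := by rw [← abs_mul_abs_self, hc, one_mul]
    have hpos : 0 < 1 - c * l := by
      refine pos_of_tendsto_symmetricMean (f := fun j => 1 - c * f j) (δ := 2) (n := i)
        (fun j => ?_) two_pos hL (fun m => ?_) ?_
      · have : |c * f j| = 1 := by rw [abs_mul, hc, hf, one_mul]
        exact sub_nonneg.2 ((le_abs_self _).trans this.le)
      · rw [hper, hfi]
        linarith
      · simpa only [funext (symmetricMean_const_sub_mul 1 c f)] using
          (hl.const_mul c).const_sub 1
    linarith
  have hlt := hmul_lt 1 abs_one
  have hgt := hmul_lt (-1) (by simp)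
  exact abs_lt.2 ⟨by linarith, by linarith⟩

end SymmetricMean

/-! ### Families with fibres of even size -/

section EvenFibers

variable {ι α : Type*} [Fintype ι] [DecidableEq α]

/-- Every value of the family `s` is taken an even number of times; equivalently, the indices can
be grouped into pairs on which `s` agrees. -/
def EvenFibers (s : ι → α) : Prop :=
  ∀ x, Even #{k | s k = x}

theorem EvenFibers.prod_comp_eq_one {R : Type*} [CommRing R] [LinearOrder R]
    [IsStrictOrderedRing R] {s : ι → α} (hs : EvenFibers s) {g : α → R} (hg : ∀ x, |g x| = 1) :
    ∏ k, g (s k) = 1 := by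
  rw [prod_comp]
  exact prod_eq_one fun x _ => by rw [← (hs x).pow_abs, hg, one_pow]

theorem evenFibers_const (hι : Even (Fintype.card ι)) (c : α) :
    EvenFibers fun _ : ι => c := fun x => by
  by_cases h : c = x <;> simp [h, hι]

theorem evenFibers_of_even_card_le {s : ι → ℤ} (h : ∀ x, Even #{k | x ≤ s k}) :
    EvenFibers s := fun x => by
  have hsplit : #{k | x ≤ s k} = #{k | s k = x} + #{k | x + 1 ≤ s k} := by
    simp only [card_filter, ← sum_add_distrib]
    exact sum_congr rfl fun k _ => by split_ifs <;> lia
  have hx := h x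
  rw [hsplit, Nat.even_add] at hx
  exact hx.2 (h (x + 1))

theorem evenFibers_fin_four (x y z w : α) :
    EvenFibers ![x, y, z, w] ↔ (x = y ∧ z = w) ∨ (x = z ∧ y = w) ∨ (x = w ∧ y = z) := by
  simp only [EvenFibers, card_filter, Fin.sum_univ_four, Matrix.cons_val]
  constructor
  · intro h
    have := h x
    have := h y
    have := h z
    grind
  · grind

end EvenFibers

/-! ### Products of shifts of the Rudin–Shapiro sequence -/

theorem zpow_sum₀ {ι G : Type*} [CommGroupWithZero G] {x : G} (hx : x ≠ 0) (t : Finset ι)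
    (f : ι → ℤ) : x ^ (∑ k ∈ t, f k) = ∏ k ∈ t, x ^ f k := by
  induction t using Finset.cons_induction with
  | empty => simp
  | cons k t hk ih => rw [sum_cons, prod_cons, zpow_add₀ hx, ih]

theorem even_of_eventuallyConst_neg_one_zpow_mul {e : ℤ}
    (h : EventuallyConst (fun i : ℤ => (-1 : ℝ) ^ (e * i)) atTop) : Even e := by
  obtain ⟨i, hi⟩ := eventuallyConst_atTop.1 h
  have hne : (-1 : ℝ) ^ (e * i) ≠ 0 := zpow_ne_zero _ (by norm_num)
  have hone : (-1 : ℝ) ^ e = 1 := by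
    have := hi (i + 1) (by lia)
    rwa [mul_add, mul_one, zpow_add₀ (by norm_num), mul_eq_left₀ hne] at this
  by_contra hodd
  rw [(Int.not_even_iff_odd.1 hodd).neg_one_zpow] at hone
  norm_num at hone

theorem exists_forall_lt_four_pow {ι : Type*} [Finite ι] (f : ι → ℤ) :
    ∃ K : ℕ, ∀ k, f k < 4 ^ K := by
  obtain ⟨B, hB⟩ := Finite.exists_le f
  obtain ⟨K, hK⟩ := pow_unbounded_of_one_lt B (by norm_num : (1 : ℤ) < 4)
  exact ⟨K, fun k => (hB k).trans_lt hK⟩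

/-- A two-sided balanced Rudin–Shapiro sequence, with values `±1` and given by the recursion in
base four. The values at `0` and `-1` are not prescribed. -/
structure IsRudinShapiro (a : ℤ → ℝ) : Prop where
  eq_one_or_eq_neg_one : ∀ i, a i = 1 ∨ a i = -1
  recursion : ∀ m : ℤ, a (4 * m) = a m ∧ a (4 * m + 1) = a m ∧
    a (4 * m + 2) = (-1 : ℝ) ^ m * a m ∧ a (4 * m + 3) = -((-1 : ℝ) ^ m) * a m

/-- The product of the shifts of `a` by the `s k`, twisted by the sign `(-1) ^ (e * i)`. Only the
parity of `e` matters: `e = 0` gives the summands of a correlation and `e = 1` those of a signed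
correlation. -/
noncomputable def signedProduct {ι : Type*} [Fintype ι] (a : ℤ → ℝ) (e : ℤ) (s : ι → ℤ) (i : ℤ) :
    ℝ :=
  (-1) ^ (e * i) * ∏ k, a (i + s k)

theorem signedProduct_add_const {ι : Type*} [Fintype ι] (a : ℤ → ℝ) (e : ℤ) (s : ι → ℤ) (j i : ℤ) :
    signedProduct a e (fun k => s k + j) i = (-1) ^ (-(e * j)) * signedProduct a e s (i + j) := by
  have hsign : (-1 : ℝ) ^ (e * i) = (-1) ^ (-(e * j)) * (-1) ^ (e * (i + j)) := by
    rw [← zpow_add₀ (by norm_num)]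
    congr 1
    ring
  simp only [signedProduct, hsign, add_right_comm, mul_assoc, ← add_assoc]

theorem eventuallyConst_signedProduct_add_const {ι : Type*} [Fintype ι] {a : ℤ → ℝ} {e : ℤ}
    {s : ι → ℤ} (h : EventuallyConst (signedProduct a e s) atTop) (j : ℤ) :
    EventuallyConst (signedProduct a e fun k => s k + j) atTop := by
  have hshift : Tendsto (· + j) atTop atTop := tendsto_atTop_add_const_right _ j tendsto_id
  exact ((h.comp_tendsto hshift).comp ((-1) ^ (-(e * j)) * ·)).congr
    (.of_forall fun i => (signedProduct_add_const a e s j i).symm)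

namespace IsRudinShapiro

variable {a : ℤ → ℝ} {ι : Type*} [Fintype ι] {e : ℤ} {s : ι → ℤ}

theorem abs_eq_one (ha : IsRudinShapiro a) (i : ℤ) : |a i| = 1 :=
  (abs_eq zero_le_one).2 (ha.eq_one_or_eq_neg_one i)

theorem abs_signedProduct (ha : IsRudinShapiro a) (e : ℤ) (s : ι → ℤ) (i : ℤ) :
    |signedProduct a e s i| = 1 := by
  simp [signedProduct, abs_mul, abs_prod, ha.abs_eq_one]

-- The exponent counts pairs `11` of adjacent binary digits: if `2 * h + l` is the last base-four
-- digit of `x`, the neighbours of `h` are `l` and the parity of `x / 4`.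
theorem apply_eq_mul_apply_div_four (ha : IsRudinShapiro a) (x : ℤ) :
    a x = (-1) ^ ((x / 2 % 2) * (x / 4 + x % 2)) * a (x / 4) := by
  obtain ⟨h0, h1, h2, h3⟩ := ha.recursion (x / 4)
  have hdigit : x % 4 = 0 ∨ x % 4 = 1 ∨ x % 4 = 2 ∨ x % 4 = 3 := by lia
  rcases hdigit with h | h | h | h
  · rw [show x / 2 % 2 = 0 by lia, zero_mul, zpow_zero, one_mul, ← h0]
    congr 1; lia
  · rw [show x / 2 % 2 = 0 by lia, zero_mul, zpow_zero, one_mul, ← h1]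
    congr 1; lia
  · rw [show x / 2 % 2 = 1 by lia, show x % 2 = 0 by lia, one_mul, add_zero, ← h2]
    congr 1; lia
  · rw [show x / 2 % 2 = 1 by lia, show x % 2 = 1 by lia, one_mul, zpow_add₀ (by norm_num),
      zpow_one, mul_neg_one, ← h3]
    congr 1; lia

theorem apply_four_pow_mul_add (ha : IsRudinShapiro a) (m : ℤ) (K : ℕ) {j : ℤ} (hj₀ : 0 ≤ j)
    (hj : j < 4 ^ K) : a (4 ^ K * (2 * m) + j) = a (2 * m) * a 0 * a j := by
  induction K generalizing j with
  | zero =>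
    obtain rfl : j = 0 := by rw [pow_zero] at hj; lia
    have : a 0 * a 0 = 1 := by rw [← abs_mul_abs_self, ha.abs_eq_one, one_mul]
    rw [mul_assoc, this, pow_zero, one_mul, add_zero, mul_one]
  | succ K ih =>
    set y := 4 ^ K * m with hy
    have hx : 4 ^ (K + 1) * (2 * m) + j = 8 * y + j := by rw [hy]; ring
    have hdiv : (8 * y + j) / 4 = 4 ^ K * (2 * m) + j / 4 := by
      rw [show 4 ^ K * (2 * m) = 2 * y by rw [hy]; ring]
      lia
    have hsign : (-1 : ℝ) ^ ((j / 2 % 2) * (4 ^ K * (2 * m) + j / 4 + j % 2)) =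
        (-1) ^ ((j / 2 % 2) * (j / 4 + j % 2)) := by
      rw [add_assoc, mul_add, zpow_add₀ (by norm_num), Even.neg_one_zpow, one_mul]
      exact (even_two_mul m).mul_left _ |>.mul_left _
    rw [hx, ha.apply_eq_mul_apply_div_four, hdiv, ih (by lia) (by rw [pow_succ] at hj; lia),
      show (8 * y + j) / 2 % 2 = j / 2 % 2 by lia, show (8 * y + j) % 2 = j % 2 by lia, hsign,
      ha.apply_eq_mul_apply_div_four j]
    ring

theorem eventually_signedProduct_recurs (ha : IsRudinShapiro a) (hι : Even (Fintype.card ι))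
    (e : ℤ) (s : ι → ℤ) :
    ∀ᶠ i in atTop, ∃ L : ℕ, 0 < L ∧
      ∀ m : ℕ, signedProduct a e s (i + L * m) = signedProduct a e s i := by
  have hnonneg : ∀ᶠ i in atTop, ∀ k, 0 ≤ i + s k := eventually_all.2 fun k =>
    (eventually_ge_atTop (-s k)).mono fun i hi => by lia
  filter_upwards [hnonneg] with i hi
  obtain ⟨K, hK⟩ := exists_forall_lt_four_pow fun k => i + s k
  refine ⟨4 ^ K * 2, by positivity, fun m => ?_⟩
  have hfactor : ∀ k, a (i + (4 ^ K * 2 : ℕ) * m + s k) = a (2 * m) * a 0 * a (i + s k) :=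
    fun k => by
      rw [← ha.apply_four_pow_mul_add m K (hi k) (hK k)]
      congr 1
      push_cast
      ring
  have hunit : (a (2 * m) * a 0) ^ Fintype.card ι = 1 := by
    rw [← hι.pow_abs, abs_mul, ha.abs_eq_one, ha.abs_eq_one, one_mul, one_pow]
  have hsign : (-1 : ℝ) ^ (e * ((4 ^ K * 2 : ℕ) * m)) = 1 :=
    Even.neg_one_zpow ⟨e * (4 ^ K * m), by push_cast; ring⟩
  simp only [signedProduct, hfactor, prod_mul_distrib, prod_const, card_univ]
  rw [← mul_pow, hunit, one_mul, mul_add, zpow_add₀ (by norm_num), hsign, mul_one]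

theorem signedProduct_four_mul (ha : IsRudinShapiro a) (e : ℤ) (s : ι → ℤ) (i : ℤ) :
    signedProduct a e s (4 * i) =
      (-1) ^ (∑ k, (s k / 2 % 2) * (s k / 4 + s k % 2)) *
        signedProduct a (∑ k, s k / 2 % 2) (fun k => s k / 4) i := by
  have hfactor : ∀ k, a (4 * i + s k) =
      (-1) ^ ((s k / 2 % 2) * (s k / 4 + s k % 2)) *
        ((-1) ^ ((s k / 2 % 2) * i) * a (i + s k / 4)) := fun k => by
    rw [ha.apply_eq_mul_apply_div_four, show (4 * i + s k) / 2 % 2 = s k / 2 % 2 by lia,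
      show (4 * i + s k) / 4 = i + s k / 4 by lia, show (4 * i + s k) % 2 = s k % 2 by lia,
      add_assoc, mul_add, zpow_add₀ (by norm_num)]
    ring
  have hsign : (-1 : ℝ) ^ (e * (4 * i)) = 1 := Even.neg_one_zpow ⟨e * (2 * i), by ring⟩
  simp only [signedProduct, hsign, one_mul, hfactor, prod_mul_distrib, sum_mul,
    zpow_sum₀ (neg_ne_zero.2 one_ne_zero : (-1 : ℝ) ≠ 0)]

theorem eventuallyConst_signedProduct_div_four (ha : IsRudinShapiro a)
    (h : EventuallyConst (signedProduct a e s) atTop) :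
    EventuallyConst (signedProduct a (∑ k, s k / 2 % 2) fun k => s k / 4) atTop := by
  have hfour : Tendsto (fun i : ℤ => 4 * i) atTop atTop :=
    tendsto_id.const_mul_atTop' (by norm_num)
  refine ((h.comp_tendsto hfour).comp
    (((-1) ^ (∑ k, (s k / 2 % 2) * (s k / 4 + s k % 2)))⁻¹ * ·)).congr (.of_forall fun i => ?_)
  simp only [Function.comp_apply, ha.signedProduct_four_mul]
  exact inv_mul_cancel_left₀ (zpow_ne_zero _ (by norm_num)) _

theorem exists_eventuallyConst_signedProduct_div_four_pow (ha : IsRudinShapiro a)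
    (h : EventuallyConst (signedProduct a e s) atTop) (K : ℕ) :
    ∃ e', EventuallyConst (signedProduct a e' fun k => s k / 4 ^ K) atTop := by
  induction K with
  | zero => exact ⟨e, by simpa using h⟩
  | succ K ih =>
    obtain ⟨e', he'⟩ := ih
    have hdiv : ∀ k, s k / 4 ^ (K + 1) = s k / 4 ^ K / 4 := fun k => by
      rw [pow_succ, Int.ediv_ediv_of_nonneg (by positivity)]
    simp only [hdiv]
    exact ⟨_, ha.eventuallyConst_signedProduct_div_four he'⟩

theorem signedProduct_of_evenFibers (ha : IsRudinShapiro a) (hs : EvenFibers s) (e i : ℤ) :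
    signedProduct a e s i = (-1) ^ (e * i) := by
  rw [signedProduct, hs.prod_comp_eq_one fun x => ha.abs_eq_one (i + x), mul_one]

theorem even_of_eventuallyConst_signedProduct (ha : IsRudinShapiro a) (hs : EvenFibers s)
    (h : EventuallyConst (signedProduct a e s) atTop) : Even e :=
  even_of_eventuallyConst_neg_one_zpow_mul <|
    h.congr <| .of_forall <| ha.signedProduct_of_evenFibers hs e

theorem even_card_eq_zero_of_eventuallyConst (ha : IsRudinShapiro a)
    (hι : Even (Fintype.card ι)) (hs : ∀ k, s k = -1 ∨ s k = 0)
    (h : EventuallyConst (signedProduct a e s) atTop) : Even #{k | s k = 0} := by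
  have hdiv : (fun k => (s k + 2) / 4) = fun _ => 0 := funext fun k => by grind
  have htwist : ∑ k, (s k + 2) / 2 % 2 = #{k | s k = 0} := by
    rw [natCast_card_filter]
    exact sum_congr rfl fun k _ => by grind
  have hconst := ha.eventuallyConst_signedProduct_div_four
    (eventuallyConst_signedProduct_add_const h 2)
  rw [hdiv, htwist] at hconst
  exact_mod_cast ha.even_of_eventuallyConst_signedProduct (evenFibers_const hι 0) hconst

theorem even_card_le_of_eventuallyConst (ha : IsRudinShapiro a) (hι : Even (Fintype.card ι))
    (h : EventuallyConst (signedProduct a e s) atTop) (x : ℤ) : Even #{k | x ≤ s k} := by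
  obtain ⟨K, hK⟩ := exists_forall_lt_four_pow fun k => |s k + -x|
  obtain ⟨e', he'⟩ := ha.exists_eventuallyConst_signedProduct_div_four_pow
    (eventuallyConst_signedProduct_add_const h (-x)) K
  have hneg : ∀ k, s k < x → (s k + -x) / 4 ^ K = -1 := fun k hk => by
    have := abs_lt.1 (hK k)
    rw [Int.ediv_eq_iff_of_pos (by positivity)]
    lia
  have hnonneg : ∀ k, x ≤ s k → (s k + -x) / 4 ^ K = 0 := fun k hk =>
    Int.ediv_eq_zero_of_lt (by lia) (abs_lt.1 (hK k)).2
  have hiff : ∀ k, (s k + -x) / 4 ^ K = 0 ↔ x ≤ s k := fun k => by grind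
  simpa only [hiff] using ha.even_card_eq_zero_of_eventuallyConst hι
    (fun k => (lt_or_ge (s k) x).imp (hneg k) (hnonneg k)) he'

theorem eventuallyConst_signedProduct_iff (ha : IsRudinShapiro a)
    (hι : Even (Fintype.card ι)) :
    EventuallyConst (signedProduct a e s) atTop ↔ Even e ∧ EvenFibers s := by
  constructor
  · intro h
    have hs := evenFibers_of_even_card_le (ha.even_card_le_of_eventuallyConst hι h)
    exact ⟨ha.even_of_eventuallyConst_signedProduct hs h, hs⟩
  · rintro ⟨he, hs⟩
    refine (EventuallyConst.const 1).congr (.of_forall fun i => ?_)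
    rw [ha.signedProduct_of_evenFibers hs, (he.mul_right i).neg_one_zpow]

theorem abs_lt_one_of_tendsto_symmetricMean_signedProduct (ha : IsRudinShapiro a)
    (hι : Even (Fintype.card ι)) (hes : ¬ (Even e ∧ EvenFibers s)) {l : ℝ}
    (hl : Tendsto (symmetricMean (signedProduct a e s)) atTop (nhds l)) : |l| < 1 :=
  abs_lt_one_of_tendsto_symmetricMean (ha.abs_signedProduct e s)
    (ha.eventually_signedProduct_recurs hι e s)
    ((ha.eventuallyConst_signedProduct_iff hι).not.2 hes) hl

end IsRudinShapiro

theorem rudin_shapiro_four_point_level_set_one_general {a : ℤ → ℝ} (ha : IsRudinShapiro a)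
    {ι : Type*} [Fintype ι] (hι : Even (Fintype.card ι)) (s : ι → ℤ) {η θ : ℝ}
    (hη : Tendsto (symmetricMean fun i => ∏ k, a (i + s k)) atTop (nhds η))
    (hθ : Tendsto (symmetricMean fun i => (-1) ^ i * ∏ k, a (i + s k)) atTop (nhds θ)) :
    (η = 1 ↔ EvenFibers s) ∧ |θ| < 1 := by
  have hη' : Tendsto (symmetricMean (signedProduct a 0 s)) atTop (nhds η) := by
    simpa +unfoldPartialApp [signedProduct] using hη
  have hθ' : Tendsto (symmetricMean (signedProduct a 1 s)) atTop (nhds θ) := by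
    simpa +unfoldPartialApp [signedProduct] using hθ
  refine ⟨⟨fun h => ?_, fun hs => ?_⟩, ?_⟩
  · by_contra hs
    have hlt := ha.abs_lt_one_of_tendsto_symmetricMean_signedProduct hι (hs ·.2) hη'
    rw [h, abs_one] at hlt
    exact lt_irrefl _ hlt
  · refine tendsto_nhds_unique hη' (tendsto_const_nhds.congr fun N => ?_)
    simp only [funext (ha.signedProduct_of_evenFibers hs 0), zero_mul, zpow_zero,
      symmetricMean_const]
  · exact ha.abs_lt_one_of_tendsto_symmetricMean_signedProduct hι (by simp) hθ'

theorem rudin_shapiro_four_point_level_set_one (a : ℤ → ℝ)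
    (ha : ∀ i, a i = 1 ∨ a i = -1)
    (hrec : ∀ m : ℤ, a (4 * m) = a m ∧ a (4 * m + 1) = a m ∧
      a (4 * m + 2) = (-1 : ℝ) ^ m * a m ∧ a (4 * m + 3) = -((-1 : ℝ) ^ m) * a m)
    (η θ : ℤ → ℤ → ℤ → ℝ)
    (hη : ∀ m₁ m₂ m₃ : ℤ, Tendsto (fun N : ℕ =>
        (1 / (2 * (N : ℝ) + 1)) *
          ∑ i ∈ Finset.Icc (-(N : ℤ)) (N : ℤ),
            a i * a (i + m₁) * a (i + m₂) * a (i + m₃))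
      atTop (nhds (η m₁ m₂ m₃)))
    (hθ : ∀ m₁ m₂ m₃ : ℤ, Tendsto (fun N : ℕ =>
        (1 / (2 * (N : ℝ) + 1)) *
          ∑ i ∈ Finset.Icc (-(N : ℤ)) (N : ℤ),
            (-1 : ℝ) ^ i * a i * a (i + m₁) * a (i + m₂) * a (i + m₃))
      atTop (nhds (θ m₁ m₂ m₃)))
    (m₁ m₂ m₃ : ℤ) :
    (η m₁ m₂ m₃ = 1 ↔
      (m₁ = 0 ∧ m₂ = m₃) ∨ (m₂ = 0 ∧ m₁ = m₃) ∨ (m₃ = 0 ∧ m₁ = m₂)) ∧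
    |θ m₁ m₂ m₃| < 1 := by
  have h := rudin_shapiro_four_point_level_set_one_general ⟨ha, hrec⟩ (by decide)
    ![0, m₁, m₂, m₃] (η := η m₁ m₂ m₃) (θ := θ m₁ m₂ m₃)
    (by simpa +unfoldPartialApp [symmetricMean, Fin.prod_univ_four] using hη m₁ m₂ m₃)
    (by simpa +unfoldPartialApp [symmetricMean, Fin.prod_univ_four, mul_assoc] using hθ m₁ m₂ m₃)
  simpa only [evenFibers_fin_four, eq_comm (a := (0 : ℤ))] using h
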